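/- Let R be a commutative ring, H ◁ R an ideal of finite index, d ≥ 3, with E_d(R) = SL_d(R). Then every element of SK₁(R, H; d) has a representative in SL_d(R,H) of the block form diag(A, I_{d−2}) with A ∈ SL₂(R,H). -/

import Mathlib

open Matrix

/-- `E_d(R)`: the subgroup of `SL_d(R)` generated by the elementary matrices
`I_d + rE_{i,j}` (`i ≠ j`, `r ∈ R`). -/
def Esub (R : Type*) [CommRing R] (d : ℕ) : Subgroup (SpecialLinearGroup (Fin d) R) :=
  Subgroup.closure {M | ∃ (i j : Fin d) (c : R), i ≠ j ∧
    (M : Matrix (Fin d) (Fin d) R) = Matrix.transvection i j c}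

/-- `E_d(R,H)`: the normal subgroup of `E_d(R)` generated (as a normal subgroup of
`E_d(R)`) by the elementary matrices `I_d + hE_{i,j}` with `h ∈ H`. -/
def EHsub (R : Type*) [CommRing R] (d : ℕ) (H : Ideal R) :
    Subgroup (SpecialLinearGroup (Fin d) R) :=
  Subgroup.closure {M | ∃ g ∈ Esub R d, ∃ s : SpecialLinearGroup (Fin d) R,
    (∃ (i j : Fin d) (c : R), i ≠ j ∧ c ∈ H ∧
      (s : Matrix (Fin d) (Fin d) R) = Matrix.transvection i j c) ∧ M = g * s * g⁻¹}

/-- `SL_d(R,H) = ker(SL_d(R) → SL_d(R/H))`. -/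
def SLrel (R : Type*) [CommRing R] (d : ℕ) (H : Ideal R) :
    Subgroup (SpecialLinearGroup (Fin d) R) :=
  MonoidHom.ker (SpecialLinearGroup.map (n := Fin d) (Ideal.Quotient.mk H))


/-- Steinberg-type data: a group with elements `x i j r` satisfying the Steinberg relations and
a representation by matrices. -/
structure StD (ι : Type*) [Fintype ι] [DecidableEq ι] (S : Type*) [CommRing S]
    (G : Type*) [Group G] where
  x : ι → ι → S → G
  π : G →* Matrix ι ι S
  add : ∀ i j r s, i ≠ j → x i j r * x i j s = x i j (r + s)
  comm : ∀ i j k l r s, i ≠ j → k ≠ l → j ≠ k → i ≠ l →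
    x i j r * x k l s = x k l s * x i j r
  rel : ∀ i j k r s, i ≠ j → j ≠ k → i ≠ k →
    x i j r * x j k s = x i k (r * s) * x j k s * x i j r
  hπ : ∀ i j r, i ≠ j → π (x i j r) = transvection i j r
  hdet : ∀ g, (π g).det = 1
  gen : Subgroup.closure {g | ∃ i j r, i ≠ j ∧ g = x i j r} = ⊤

namespace StD

variable {ι : Type*} [Fintype ι] [DecidableEq ι] {S : Type*} [CommRing S]
    {G : Type*} [Group G] (D : StD ι S G)

/-- Subgroup generated by the root subgroups satisfying `P`. -/
def E (P : ι → ι → Prop) : Subgroup G :=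
  Subgroup.closure {g | ∃ i j r, i ≠ j ∧ P i j ∧ g = D.x i j r}

/-- The rank one subgroup. -/
def M (i j : ι) : Subgroup G := D.E (fun p q => (p = i ∧ q = j) ∨ (p = j ∧ q = i))

lemma x_zero {i j : ι} (h : i ≠ j) : D.x i j 0 = 1 := by
  have := D.add i j 0 0 h
  simpa using this

lemma x_inv {i j : ι} (r : S) (h : i ≠ j) : (D.x i j r)⁻¹ = D.x i j (-r) := by
  rw [inv_eq_iff_mul_eq_one, D.add _ _ _ _ h, add_neg_cancel, D.x_zero h]

lemma x_mem {P : ι → ι → Prop} {i j : ι} (h : i ≠ j) (hP : P i j) (r : S) :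
    D.x i j r ∈ D.E P := Subgroup.subset_closure ⟨i, j, r, h, hP, rfl⟩

lemma E_mono {P Q : ι → ι → Prop} (h : ∀ i j, i ≠ j → P i j → Q i j) : D.E P ≤ D.E Q := by
  refine Subgroup.closure_mono ?_
  rintro g ⟨i, j, r, hij, hP, rfl⟩
  exact ⟨i, j, r, hij, h i j hij hP, rfl⟩

lemma E_ind {P : ι → ι → Prop} {p : G → Prop} (one : p 1)
    (step : ∀ i j r y, i ≠ j → P i j → p y → p (D.x i j r * y)) {g : G} (hg : g ∈ D.E P) :
    p g := by
  induction hg using Subgroup.closure_induction_left with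
  | one => exact one
  | mul_left a ha y hy ih =>
    obtain ⟨i, j, r, hij, hP, rfl⟩ := ha
    exact step i j r y hij hP ih
  | inv_mul_cancel a ha y hy ih =>
    obtain ⟨i, j, r, hij, hP, rfl⟩ := ha
    rw [D.x_inv r hij]
    exact step i j _ y hij hP ih

lemma conj1 {i j k l : ι} (r s : S) (hij : i ≠ j) (hkl : k ≠ l) (h1 : j ≠ k) (h2 : i ≠ l) :
    D.x i j r * D.x k l s * (D.x i j r)⁻¹ = D.x k l s := by
  rw [D.comm _ _ _ _ _ _ hij hkl h1 h2, mul_inv_cancel_right]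

lemma conj2 {i j l : ι} (r s : S) (hij : i ≠ j) (hjl : j ≠ l) (h2 : i ≠ l) :
    D.x i j r * D.x j l s * (D.x i j r)⁻¹ = D.x i l (r * s) * D.x j l s := by
  rw [D.rel _ _ _ _ _ hij hjl h2, mul_inv_cancel_right]

lemma conj3 {i j k : ι} (r s : S) (hij : i ≠ j) (hki : k ≠ i) (h2 : k ≠ j) :
    D.x i j r * D.x k i s * (D.x i j r)⁻¹ = D.x k i s * D.x k j (-(s * r)) := by
  have h := D.rel k i j s r hki hij h2
  rw [← D.x_inv _ h2, mul_inv_eq_iff_eq_mul]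
  have c1 := D.comm k i k j s (s * r) hki h2 hki.symm h2
  have c2 := D.comm i j k j r (s * r) hij h2 h2.symm hij
  have : D.x i j r * D.x k i s = (D.x k j (s*r))⁻¹ * (D.x k i s * D.x i j r) := by
    rw [h]; group
  rw [this]
  have hcomm : (D.x k j (s*r))⁻¹ * D.x k i s = D.x k i s * (D.x k j (s*r))⁻¹ := by
    rw [inv_mul_eq_iff_eq_mul, ← mul_assoc, ← c1]; group
  rw [← mul_assoc, hcomm]

/-- Factor elements of a generated group when one factor normalises another. -/
lemma factor {N X : Subgroup G} (hX : ∀ a ∈ X, ∀ n ∈ N, a * n * a⁻¹ ∈ N) {A : Set G}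
    (hA : ∀ a ∈ A, a ∈ N ∨ a ∈ X) {g : G} (hg : g ∈ Subgroup.closure A) :
    ∃ n ∈ N, ∃ a ∈ X, g = n * a := by
  induction hg using Subgroup.closure_induction with
  | mem a ha =>
    rcases hA a ha with h | h
    · exact ⟨a, h, 1, X.one_mem, by simp⟩
    · exact ⟨1, N.one_mem, a, h, by simp⟩
  | one => exact ⟨1, N.one_mem, 1, X.one_mem, by simp⟩
  | mul y z _ _ hy hz =>
    obtain ⟨n, hn, a, ha, rfl⟩ := hy
    obtain ⟨m, hm, b, hb, rfl⟩ := hz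
    exact ⟨n * (a * m * a⁻¹), N.mul_mem hn (hX a ha m hm), a * b, X.mul_mem ha hb, by group⟩
  | inv y _ hy =>
    obtain ⟨n, hn, a, ha, rfl⟩ := hy
    refine ⟨a⁻¹ * n⁻¹ * (a⁻¹)⁻¹, hX _ (X.inv_mem ha) _ (N.inv_mem hn), a⁻¹, X.inv_mem ha, by group⟩

lemma norm_closure {N : Subgroup G} {A : Set G} (hN : N = Subgroup.closure A) (a : G)
    (h : ∀ n ∈ A, a * n * a⁻¹ ∈ N) : ∀ n ∈ N, a * n * a⁻¹ ∈ N := by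
  intro n hn
  rw [hN] at hn
  induction hn using Subgroup.closure_induction with
  | mem n hn => exact h n hn
  | one => simp
  | mul y z _ _ hy hz =>
    have : a * (y * z) * a⁻¹ = (a * y * a⁻¹) * (a * z * a⁻¹) := by group
    rw [this]; exact N.mul_mem hy hz
  | inv y _ hy =>
    have : a * y⁻¹ * a⁻¹ = (a * y * a⁻¹)⁻¹ := by group
    rw [this]; exact N.inv_mem hy

lemma norm_E {P Q : ι → ι → Prop}
    (h : ∀ i j r k l s, i ≠ j → k ≠ l → P i j → Q k l →
      D.x i j r * D.x k l s * (D.x i j r)⁻¹ ∈ D.E Q) :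
    ∀ a ∈ D.E P, ∀ n ∈ D.E Q, a * n * a⁻¹ ∈ D.E Q := by
  intro a ha
  refine D.E_ind (p := fun a => ∀ n ∈ D.E Q, a * n * a⁻¹ ∈ D.E Q) ?_ ?_ ha
  · intro n hn; simpa using hn
  · intro i j r y hij hP hy n hn
    have : D.x i j r * y * n * (D.x i j r * y)⁻¹
      = D.x i j r * (y * n * y⁻¹) * (D.x i j r)⁻¹ := by group
    rw [this]
    refine norm_closure (A := _) rfl _ ?_ _ (hy n hn)
    rintro _ ⟨k, l, s, hkl, hQ, rfl⟩
    exact h i j r k l s hij hkl hP hQ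

lemma π_x_apply {i j : ι} (r : S) (hij : i ≠ j) (p q : ι) :
    D.π (D.x i j r) p q = (1 : Matrix ι ι S) p q + if i = p ∧ j = q then r else 0 := by
  rw [D.hπ _ _ _ hij]; simp [transvection, Matrix.single_apply]

lemma π_x_mul_ne {i j : ι} (r : S) (hij : i ≠ j) (y : G) (p q : ι) (h : p ≠ i) :
    D.π (D.x i j r * y) p q = D.π y p q := by
  rw [map_mul, D.hπ _ _ _ hij, transvection_mul_apply_of_ne _ _ _ _ h]

lemma π_x_mul_same {i j : ι} (r : S) (hij : i ≠ j) (y : G) (q : ι) :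
    D.π (D.x i j r * y) i q = D.π y i q + r * D.π y j q := by
  rw [map_mul, D.hπ _ _ _ hij, transvection_mul_apply_same]

/-- rows avoided by `P` are trivial -/
lemma row_trivial {P : ι → ι → Prop} {p : ι} (hp : ∀ i j, i ≠ j → P i j → p ≠ i) {g : G}
    (hg : g ∈ D.E P) (q : ι) : D.π g p q = (1 : Matrix ι ι S) p q := by
  refine D.E_ind (p := fun g => D.π g p q = (1 : Matrix ι ι S) p q) (by simp) ?_ hg
  intro i j r y hij hP ih
  rw [D.π_x_mul_ne _ hij _ _ _ (hp i j hij hP), ih]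

lemma col_trivial {P : ι → ι → Prop} {q : ι} (hq : ∀ i j, i ≠ j → P i j → q ≠ j) {g : G}
    (hg : g ∈ D.E P) : ∀ p, D.π g p q = (1 : Matrix ι ι S) p q := by
  refine D.E_ind (p := fun g => ∀ p, D.π g p q = (1 : Matrix ι ι S) p q) (by simp) ?_ hg
  intro i j r y hij hP ih p
  by_cases h : p = i
  · subst h
    rw [D.π_x_mul_same _ hij, ih, ih, Matrix.one_apply_ne (hq p j hij hP).symm]; simp
  · rw [D.π_x_mul_ne _ hij _ _ _ h, ih]

lemma M_symm (i j : ι) : D.M i j = D.M j i := by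
  unfold M; congr 1; ext p q; tauto

lemma M_row {i j p : ι} (h1 : p ≠ i) (h2 : p ≠ j) {g : G} (hg : g ∈ D.M i j) (q : ι) :
    D.π g p q = (1 : Matrix ι ι S) p q := by
  refine D.row_trivial ?_ hg q
  rintro a b _ (⟨rfl, rfl⟩ | ⟨rfl, rfl⟩) <;> assumption

lemma M_col {i j q : ι} (h1 : q ≠ i) (h2 : q ≠ j) {g : G} (hg : g ∈ D.M i j) (p : ι) :
    D.π g p q = (1 : Matrix ι ι S) p q := by
  refine D.col_trivial ?_ hg p
  rintro a b _ (⟨rfl, rfl⟩ | ⟨rfl, rfl⟩) <;> assumption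

lemma x_mem_M {i j : ι} (h : i ≠ j) (r : S) : D.x i j r ∈ D.M i j :=
  D.x_mem h (Or.inl ⟨rfl, rfl⟩) r

lemma x_mem_M' {i j : ι} (h : i ≠ j) (r : S) : D.x j i r ∈ D.M i j :=
  D.x_mem h.symm (Or.inr ⟨rfl, rfl⟩) r

lemma M_mul {i j : ι} (hij : i ≠ j) {g : G} (hg : g ∈ D.M i j) (h : G) {p : ι}
    (hp : p = i ∨ p = j) (q : ι) :
    D.π (g * h) p q = D.π g p i * D.π h i q + D.π g p j * D.π h j q := by
  rw [map_mul, Matrix.mul_apply]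
  refine Fintype.sum_eq_add i j hij ?_
  rintro k ⟨hk1, hk2⟩
  rw [D.M_col hk1 hk2 hg, Matrix.one_apply_ne, zero_mul]
  rintro rfl; rcases hp with h | h <;> tauto

lemma M_mul' {i j : ι} (hij : i ≠ j) (g : G) {h : G} (hh : h ∈ D.M i j) (p : ι) {q : ι}
    (hq : q = i ∨ q = j) :
    D.π (g * h) p q = D.π g p i * D.π h i q + D.π g p j * D.π h j q := by
  rw [map_mul, Matrix.mul_apply]
  refine Fintype.sum_eq_add i j hij ?_
  rintro k ⟨hk1, hk2⟩
  rw [D.M_row hk1 hk2 hh, Matrix.one_apply_ne, mul_zero]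
  rintro rfl; rcases hq with h | h <;> tauto

/-- column action -/
lemma act_col {i j k : ι} (hij : i ≠ j) (hik : i ≠ k) (hjk : j ≠ k) {g : G}
    (hg : g ∈ D.M i j) : ∀ a b, g * (D.x i k a * D.x j k b) * g⁻¹ =
      D.x i k (D.π g i i * a + D.π g i j * b) * D.x j k (D.π g j i * a + D.π g j j * b) := by
  refine D.E_ind (p := fun g => ∀ a b, g * (D.x i k a * D.x j k b) * g⁻¹ =
      D.x i k (D.π g i i * a + D.π g i j * b) * D.x j k (D.π g j i * a + D.π g j j * b))
      ?_ ?_ hg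
  · intro a b; simp [hij, hij.symm]
  · rintro p q r y hpq hP ih a b
    have e : D.x p q r * y * (D.x i k a * D.x j k b) * (D.x p q r * y)⁻¹ =
      D.x p q r * (y * (D.x i k a * D.x j k b) * y⁻¹) * (D.x p q r)⁻¹ := by group
    rw [e, ih]
    have e2 : ∀ u v w : G, u * (v * w) * u⁻¹ = (u * v * u⁻¹) * (u * w * u⁻¹) := by
      intros; group
    rw [e2]
    rcases hP with ⟨rfl, rfl⟩ | ⟨rfl, rfl⟩
    · rw [D.conj1 _ _ hij hik hij.symm hik, D.conj2 _ _ hij hjk hik, ← mul_assoc,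
        D.add _ _ _ _ hik]
      simp only [D.π_x_mul_same _ hij, D.π_x_mul_ne _ hij _ _ _ hij.symm]
      congr 2; ring
    · rw [D.conj1 _ _ hpq hjk hij hjk, D.conj2 _ _ hpq hik hjk,
        D.comm _ _ _ _ _ _ hjk hik hik.symm hjk, mul_assoc, D.add _ _ _ _ hjk]
      simp only [D.π_x_mul_same _ hpq, D.π_x_mul_ne _ hpq _ _ _ hij]
      congr 2; ring

lemma M_inv_x {i j p q : ι} (hij : i ≠ j) (hpq : p ≠ q) (r : S) {y : G} (hy : y ∈ D.M i j)
    (hP : (p = i ∧ q = j) ∨ (p = j ∧ q = i)) (s : ι) :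
    D.π (D.x p q r * y)⁻¹ s q = D.π y⁻¹ s q - r * D.π y⁻¹ s p ∧
    D.π (D.x p q r * y)⁻¹ s p = D.π y⁻¹ s p := by
  rw [_root_.mul_inv_rev, D.x_inv _ hpq, map_mul, D.hπ _ _ _ hpq, mul_transvection_apply_same,
    mul_transvection_apply_of_ne _ _ _ _ hpq]
  constructor
  · ring
  · rfl

/-- row action -/
lemma act_row {i j k : ι} (hij : i ≠ j) (hik : i ≠ k) (hjk : j ≠ k) {g : G}
    (hg : g ∈ D.M i j) : ∀ a b, g * (D.x k i a * D.x k j b) * g⁻¹ =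
      D.x k i (D.π g⁻¹ i i * a + D.π g⁻¹ j i * b) *
      D.x k j (D.π g⁻¹ i j * a + D.π g⁻¹ j j * b) := by
  have key : g ∈ D.M i j ∧ ∀ a b, g * (D.x k i a * D.x k j b) * g⁻¹ =
      D.x k i (D.π g⁻¹ i i * a + D.π g⁻¹ j i * b) *
      D.x k j (D.π g⁻¹ i j * a + D.π g⁻¹ j j * b) := by
    refine D.E_ind (p := fun g => g ∈ D.M i j ∧ ∀ a b, g * (D.x k i a * D.x k j b) * g⁻¹ =
      D.x k i (D.π g⁻¹ i i * a + D.π g⁻¹ j i * b) *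
      D.x k j (D.π g⁻¹ i j * a + D.π g⁻¹ j j * b)) ?_ ?_ hg
    · refine ⟨Subgroup.one_mem _, ?_⟩
      intro a b; simp [hij, hij.symm]
    · rintro p q r y hpq hP ⟨hy, ih⟩
      refine ⟨Subgroup.mul_mem _ (D.x_mem hpq hP r) hy, ?_⟩
      intro a b
      have e : D.x p q r * y * (D.x k i a * D.x k j b) * (D.x p q r * y)⁻¹ =
        D.x p q r * (y * (D.x k i a * D.x k j b) * y⁻¹) * (D.x p q r)⁻¹ := by group
      rw [e, ih]
      have e2 : ∀ u v w : G, u * (v * w) * u⁻¹ = (u * v * u⁻¹) * (u * w * u⁻¹) := by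
        intros; group
      rw [e2]
      have hM := D.M_inv_x hij hpq r hy hP
      rcases hP with ⟨rfl, rfl⟩ | ⟨rfl, rfl⟩
      · rw [D.conj3 _ _ hij hik.symm hjk.symm, D.conj1 _ _ hij hjk.symm hjk hij, mul_assoc,
          D.add _ _ _ _ hjk.symm]
        simp only [(hM _).1, (hM _).2]
        congr 2; ring
      · rw [D.conj3 _ _ hpq hjk.symm hik.symm, D.conj1 _ _ hpq hik.symm hik hpq, ← mul_assoc,
          D.comm _ _ _ _ _ _ hik.symm hjk.symm hik hjk.symm, mul_assoc,
          D.add _ _ _ _ hik.symm,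
          D.comm _ _ _ _ _ _ hjk.symm hik.symm hjk hik.symm]
        simp only [(hM _).1, (hM _).2]
        congr 2; ring
  exact key.2

/-- elements with diagonal matrix -/
def Dg : Subgroup G where
  carrier := {g | ∀ p q, p ≠ q → D.π g p q = 0}
  one_mem' := by intro p q h; simp [h]
  mul_mem' := by
    intro a b ha hb p q h
    rw [map_mul, Matrix.mul_apply]
    refine Finset.sum_eq_zero fun k _ => ?_
    by_cases hk : p = k
    · subst hk; rw [hb _ _ h, mul_zero]
    · rw [ha _ _ hk, zero_mul]
  inv_mem' := by
    intro g hg p q h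
    have key : ∀ p q, D.π (g⁻¹ * g) p q = D.π g⁻¹ p q * D.π g q q := by
      intro p q
      rw [map_mul, Matrix.mul_apply]
      refine Fintype.sum_eq_single q ?_
      intro k hk
      rw [hg _ _ hk, mul_zero]
    have h1 := key p q
    have h2 := key q q
    simp only [inv_mul_cancel, map_one, Matrix.one_apply_eq, Matrix.one_apply_ne h] at h1 h2
    calc D.π g⁻¹ p q = D.π g⁻¹ p q * (D.π g⁻¹ q q * D.π g q q) := by rw [← h2, mul_one]
      _ = D.π g⁻¹ q q * (D.π g⁻¹ p q * D.π g q q) := by ring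
      _ = 0 := by rw [← h1, mul_zero]

lemma Dg_mul (g : G) {h : G} (hh : h ∈ D.Dg) (p q : ι) :
    D.π (g * h) p q = D.π g p q * D.π h q q := by
  rw [map_mul, Matrix.mul_apply]
  refine Fintype.sum_eq_single q ?_
  intro k hk
  rw [hh _ _ hk, mul_zero]

/-- rank one torus -/
def T (i j : ι) : Subgroup G := D.M i j ⊓ D.Dg

lemma T_symm (i j : ι) : D.T i j = D.T j i := by unfold T; rw [D.M_symm]

lemma T_col {i j k : ι} (hij : i ≠ j) (hik : i ≠ k) (hjk : j ≠ k) {g : G} (hg : g ∈ D.T i j)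
    (r : S) : g * D.x i k r * g⁻¹ = D.x i k (D.π g i i * r * D.π g⁻¹ k k) := by
  have h := D.act_col hij hik hjk hg.1 r 0
  rw [D.x_zero hjk, mul_one] at h
  rw [h, hg.2 _ _ hij, hg.2 _ _ hij.symm, D.M_col hik.symm hjk.symm (Subgroup.inv_mem _ hg.1)]
  simp [D.x_zero hjk]

lemma T_row {i j k : ι} (hij : i ≠ j) (hik : i ≠ k) (hjk : j ≠ k) {g : G} (hg : g ∈ D.T i j)
    (r : S) : g * D.x k i r * g⁻¹ = D.x k i (D.π g k k * r * D.π g⁻¹ i i) := by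
  have h := D.act_row hij hik hjk hg.1 r 0
  rw [D.x_zero hjk.symm, mul_one] at h
  have hi := (D.T i j).inv_mem hg
  rw [h, hi.2 _ _ hij, hi.2 _ _ hij.symm, D.M_col hik.symm hjk.symm hg.1]
  simp [D.x_zero hjk.symm, mul_comm]

lemma T_disj {i j p q : ι} (hpi : p ≠ i) (hpj : p ≠ j) (hqi : q ≠ i) (hqj : q ≠ j)
    (hpq : p ≠ q) {g : G} (hg : g ∈ D.M i j) (r : S) :
    g * D.x p q r * g⁻¹ = D.x p q r := by
  refine D.E_ind (p := fun g => g * D.x p q r * g⁻¹ = D.x p q r) (by simp) ?_ hg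
  intro a b s y hab hP ih
  have e : D.x a b s * y * D.x p q r * (D.x a b s * y)⁻¹ =
    D.x a b s * (y * D.x p q r * y⁻¹) * (D.x a b s)⁻¹ := by group
  rw [e, ih]
  rcases hP with ⟨rfl, rfl⟩ | ⟨rfl, rfl⟩
  · exact D.conj1 _ _ hab hpq hpj.symm hqi.symm
  · exact D.conj1 _ _ hab hpq hpi.symm hqj.symm

lemma x_eq_comm {i j k : ι} (hij : i ≠ j) (hik : i ≠ k) (hjk : j ≠ k) (r s : S) :
    D.x i j (r * s) = D.x i k r * D.x k j s * (D.x i k r)⁻¹ * (D.x k j s)⁻¹ := by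
  rw [D.conj2 _ _ hik hjk.symm hij, mul_inv_cancel_right]

lemma T_self {i j k : ι} (hij : i ≠ j) (hik : i ≠ k) (hjk : j ≠ k) {g : G} (hg : g ∈ D.T i j)
    (r : S) : g * D.x i j r * g⁻¹ = D.x i j (D.π g i i * r * D.π g⁻¹ j j) := by
  have h1 := D.T_col hij hik hjk hg r
  have h2 := D.T_row (i := j) (j := i) hij.symm hjk hik (by rw [D.T_symm]; exact hg) 1
  have hi := (D.T i j).inv_mem hg
  rw [D.M_col hik.symm hjk.symm hi.1, Matrix.one_apply_eq, mul_one] at h1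
  rw [D.M_col hik.symm hjk.symm hg.1, Matrix.one_apply_eq, one_mul, one_mul] at h2
  rw [D.x_eq_comm hij hik hjk (D.π g i i * r), ← h1, ← h2]
  conv_lhs => rw [← mul_one r, D.x_eq_comm hij hik hjk r 1]
  group

lemma T_act (h3 : ∀ i j : ι, ∃ k, i ≠ k ∧ j ≠ k) {i j : ι} (hij : i ≠ j) {g : G}
    (hg : g ∈ D.T i j) {p q : ι} (hpq : p ≠ q) (r : S) :
    g * D.x p q r * g⁻¹ = D.x p q (D.π g p p * r * D.π g⁻¹ q q) := by
  have hg' : g ∈ D.T j i := by rw [D.T_symm]; exact hg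
  obtain ⟨k, hik, hjk⟩ := h3 i j
  by_cases hpi : p = i
  · subst hpi
    by_cases hqj : q = j
    · subst hqj; exact D.T_self hij hik hjk hg r
    · exact D.T_col hij hpq (Ne.symm hqj) hg r
  · by_cases hpj : p = j
    · subst hpj
      by_cases hqi : q = i
      · subst hqi; exact D.T_self hij.symm hjk hik hg' r
      · exact D.T_col hij.symm hpq (Ne.symm hqi) hg' r
    · by_cases hqi : q = i
      · subst hqi; exact D.T_row hij hpq.symm (Ne.symm hpj) hg r
      · by_cases hqj : q = j
        · subst hqj; exact D.T_row hij.symm hpq.symm (Ne.symm hpi) hg' r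
        · rw [D.T_disj hpi hpj hqi hqj hpq hg.1, D.M_col hpi hpj hg.1,
            D.M_col hqi hqj (Subgroup.inv_mem _ hg.1)]
          simp

lemma T_norm (h3 : ∀ i j : ι, ∃ k, i ≠ k ∧ j ≠ k) {i j : ι} (hij : i ≠ j) {g : G}
    (hg : g ∈ D.T i j) (P : ι → ι → Prop) : ∀ n ∈ D.E P, g * n * g⁻¹ ∈ D.E P := by
  refine norm_closure (A := _) rfl _ ?_
  rintro _ ⟨k, l, s, hkl, hQ, rfl⟩
  rw [D.T_act h3 hij hg hkl]
  exact D.x_mem hkl hQ _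

lemma T_norm_T (h3 : ∀ i j : ι, ∃ k, i ≠ k ∧ j ≠ k) {i j : ι} (hij : i ≠ j) {g : G}
    (hg : g ∈ D.T i j) (k l : ι) : ∀ n ∈ D.T k l, g * n * g⁻¹ ∈ D.T k l := by
  intro n hn
  exact ⟨D.T_norm h3 hij hg _ n hn.1,
    Subgroup.mul_mem _ (Subgroup.mul_mem _ hg.2 hn.2) (Subgroup.inv_mem _ hg.2)⟩

lemma mem_T_of_ker {i j : ι} {g : G} (hg : g ∈ D.M i j) (hK : D.π g = 1) : g ∈ D.T i j :=
  ⟨hg, fun p q h => by rw [hK, Matrix.one_apply_ne h]⟩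

lemma π_inv_of_ker {g : G} (hK : D.π g = 1) : D.π g⁻¹ = 1 := by
  have : D.π (g * g⁻¹) = 1 := by simp
  rwa [map_mul, hK, one_mul] at this

lemma central (h3 : ∀ i j : ι, ∃ k, i ≠ k ∧ j ≠ k) {i j : ι} (hij : i ≠ j) {g : G}
    (hg : g ∈ D.M i j) (hK : D.π g = 1) (w : G) : w * g * w⁻¹ = g := by
  have hw : w ∈ Subgroup.closure {g | ∃ i j r, i ≠ j ∧ g = D.x i j r} := by
    rw [D.gen]; trivial
  have hT := D.mem_T_of_ker hg hK
  rw [mul_inv_eq_iff_eq_mul]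
  induction hw using Subgroup.closure_induction with
  | mem a ha =>
    obtain ⟨p, q, r, hpq, rfl⟩ := ha
    have := D.T_act h3 hij hT hpq r
    rw [hK, D.π_inv_of_ker hK] at this
    simp only [Matrix.one_apply_eq, one_mul, mul_one] at this
    rw [mul_inv_eq_iff_eq_mul] at this
    exact this.symm
  | one => simp
  | mul y z _ _ hy hz => rw [mul_assoc, hz, ← mul_assoc, hy, mul_assoc]
  | inv y _ hy => rw [inv_mul_eq_iff_eq_mul, ← mul_assoc, hy, mul_inv_cancel_right]

/-- Weyl conjugation -/
lemma weyl {k i j : ι} (hki : k ≠ i) (hkj : k ≠ j) (hij : i ≠ j) :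
    ∃ w ∈ D.M k i, ∀ t ∈ D.M i j, w * t * w⁻¹ ∈ D.M k j := by
  let w := D.x k i 1 * (D.x i k (-1) * (D.x k i 1 * 1))
  have hw : w ∈ D.M k i := by
    refine Subgroup.mul_mem _ (D.x_mem_M hki _) (Subgroup.mul_mem _ (D.x_mem_M' hki _)
      (Subgroup.mul_mem _ (D.x_mem_M hki _) (Subgroup.one_mem _)))
  have hwi : w⁻¹ = D.x k i (-1) * (D.x i k 1 * (D.x k i (-1) * 1)) := by
    simp only [w, _root_.mul_inv_rev, D.x_inv _ hki, D.x_inv _ hki.symm, neg_neg, inv_one, one_mul,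
      mul_one, mul_assoc]
  refine ⟨w, hw, ?_⟩
  intro t ht
  refine D.E_ind (p := fun t => w * t * w⁻¹ ∈ D.M k j) (by simp [Subgroup.one_mem]) ?_ ht
  intro p q r y hpq hP ih
  have e : w * (D.x p q r * y) * w⁻¹ = (w * D.x p q r * w⁻¹) * (w * y * w⁻¹) := by group
  rw [e]
  refine Subgroup.mul_mem _ ?_ ih
  rcases hP with ⟨rfl, rfl⟩ | ⟨rfl, rfl⟩
  · have h := D.act_col hki hkj hij hw 0 r
    rw [D.x_zero hkj, one_mul] at h
    rw [h]
    have h0 : D.π w p p = 0 := by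
      simp only [w]
      simp only [D.π_x_mul_same _ hki, D.π_x_mul_ne _ hki _ _ _ hki.symm,
        D.π_x_mul_same _ hki.symm, D.π_x_mul_ne _ hki.symm _ _ _ hki, map_one,
        Matrix.one_apply_ne hki, Matrix.one_apply_eq]
      ring
    simp only [h0, mul_zero, zero_mul, add_zero, D.x_zero hij, mul_one]
    exact D.x_mem_M hkj _
  · have h := D.act_row hki hkj hij hw 0 r
    rw [D.x_zero hkj.symm, one_mul] at h
    rw [h]
    have h0 : D.π w⁻¹ q q = 0 := by
      rw [hwi]
      simp only [D.π_x_mul_same _ hki, D.π_x_mul_ne _ hki _ _ _ hki.symm,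
        D.π_x_mul_same _ hki.symm, D.π_x_mul_ne _ hki.symm _ _ _ hki, map_one,
        Matrix.one_apply_ne hki, Matrix.one_apply_eq]
      ring
    simp only [h0, mul_zero, zero_mul, add_zero, D.x_zero hpq, mul_one]
    exact D.x_mem_M' hkj _

lemma ker_move (h3 : ∀ i j : ι, ∃ k, i ≠ k ∧ j ≠ k) {i j k : ι} (hij : i ≠ j) (hkj : k ≠ j)
    {g : G} (hg : g ∈ D.M i j) (hK : D.π g = 1) : g ∈ D.M k j := by
  by_cases hki : k = i
  · subst hki; exact hg
  obtain ⟨w, _, h⟩ := D.weyl hki hkj hij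
  have := h g hg
  rwa [D.central h3 hij hg hK] at this

/-- `T_ij ⊆ T_ki T_kj` -/
lemma T_star (h3 : ∀ i j : ι, ∃ k, i ≠ k ∧ j ≠ k) {k i j : ι} (hki : k ≠ i) (hkj : k ≠ j)
    (hij : i ≠ j) {t : G} (ht : t ∈ D.T i j) : ∃ a ∈ D.T k i, ∃ b ∈ D.T k j, t = a * b := by
  obtain ⟨w, hw, h⟩ := D.weyl hki hkj hij
  have hb := h t ht.1
  set b := w * t * w⁻¹ with hbdef
  have hc : w * (t * w⁻¹ * t⁻¹) ∈ D.M k i :=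
    Subgroup.mul_mem _ hw (D.T_norm h3 hij ht _ _ (Subgroup.inv_mem _ hw))
  set c := w * (t * w⁻¹ * t⁻¹) with hcdef
  have hbc : b = c * t := by rw [hbdef, hcdef]; group
  have hbT : b ∈ D.T k j := by
    refine ⟨hb, ?_⟩
    intro p q hpq
    by_cases h1 : p = k ∧ q = j
    · obtain ⟨rfl, rfl⟩ := h1
      rw [hbc, D.Dg_mul _ ht.2, D.M_col hkj.symm hij.symm hc, Matrix.one_apply_ne hpq, zero_mul]
    by_cases h2 : p = j ∧ q = k
    · obtain ⟨rfl, rfl⟩ := h2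
      rw [hbc, D.Dg_mul _ ht.2, D.M_row hkj.symm hij.symm hc, Matrix.one_apply_ne hpq, zero_mul]
    by_cases h3 : p ≠ k ∧ p ≠ j
    · rw [D.M_row h3.1 h3.2 hb, Matrix.one_apply_ne hpq]
    · rw [D.M_col (i := k) (j := j) ?_ ?_ hb, Matrix.one_apply_ne hpq]
      · rintro rfl
        have : p = j := by by_contra hh; exact h3 ⟨hpq, hh⟩
        exact h2 ⟨this, rfl⟩
      · rintro rfl
        have : p = k := by by_contra hh; exact h3 ⟨hh, hpq⟩
        exact h1 ⟨this, rfl⟩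
  have hcT : c ∈ D.T k i := by
    refine ⟨hc, ?_⟩
    have : c = b * t⁻¹ := by rw [hbc]; group
    rw [this]
    exact Subgroup.mul_mem _ hbT.2 (Subgroup.inv_mem _ ht.2)
  exact ⟨c⁻¹, Subgroup.inv_mem _ hcT, b, hbT, by rw [hbc]; group⟩

/-- star torus -/
def TT (o : ι) (s : Finset ι) : Subgroup G := Subgroup.closure {g | ∃ j ∈ s, o ≠ j ∧ g ∈ D.T o j}

lemma TT_mem {o : ι} {s : Finset ι} {j : ι} (hj : j ∈ s) (hoj : o ≠ j) {g : G}
    (hg : g ∈ D.T o j) : g ∈ D.TT o s := Subgroup.subset_closure ⟨j, hj, hoj, hg⟩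

lemma T_le_TT (h3 : ∀ i j : ι, ∃ k, i ≠ k ∧ j ≠ k) (o : ι) {i j : ι} (hij : i ≠ j) :
    D.T i j ≤ D.TT o Finset.univ := by
  intro t ht
  by_cases hi : o = i
  · subst hi; exact D.TT_mem (Finset.mem_univ j) hij ht
  by_cases hj : o = j
  · subst hj; rw [D.T_symm] at ht; exact D.TT_mem (Finset.mem_univ i) hij.symm ht
  obtain ⟨a, ha, b, hb, rfl⟩ := D.T_star h3 hi hj hij ht
  exact Subgroup.mul_mem _ (D.TT_mem (Finset.mem_univ _) hi ha) (D.TT_mem (Finset.mem_univ _) hj hb)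

lemma TT_Dg (o : ι) (s : Finset ι) : D.TT o s ≤ D.Dg := by
  refine (Subgroup.closure_le _).2 ?_
  rintro g ⟨j, _, _, hg⟩
  exact hg.2

lemma TT_norm (h3 : ∀ i j : ι, ∃ k, i ≠ k ∧ j ≠ k) (o : ι) (s : Finset ι) (P : ι → ι → Prop) :
    ∀ t ∈ D.TT o s, ∀ n ∈ D.E P, t * n * t⁻¹ ∈ D.E P := by
  intro t ht
  induction ht using Subgroup.closure_induction_left with
  | one => intro n hn; simpa using hn
  | mul_left a ha y hy ih =>
    intro n hn
    obtain ⟨j, _, hoj, ha⟩ := ha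
    have := D.T_norm h3 hoj ha P _ (ih n hn)
    convert this using 1; group
  | inv_mul_cancel a ha y hy ih =>
    intro n hn
    obtain ⟨j, _, hoj, ha⟩ := ha
    have := D.T_norm h3 hoj (Subgroup.inv_mem _ ha) P _ (ih n hn)
    convert this using 1; group

lemma TT_diag (o : ι) (s : Finset ι) {j : ι} (hj : j ∉ s) (hoj : o ≠ j) {t : G}
    (ht : t ∈ D.TT o s) : D.π t j j = 1 := by
  have key : ∀ g, ∀ k ∈ s, o ≠ k → g ∈ D.T o k → D.π g j j = 1 := by
    intro g k hk hok hg
    rw [D.M_row hoj.symm (by rintro rfl; exact hj hk) hg.1, Matrix.one_apply_eq]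
  induction ht using Subgroup.closure_induction_right with
  | one => simp
  | mul_right y hy a ha ih =>
    obtain ⟨k, hk, hok, ha⟩ := ha
    rw [D.Dg_mul _ ha.2, ih, key _ k hk hok ha, mul_one]
  | mul_inv_cancel y hy a ha ih =>
    obtain ⟨k, hk, hok, ha⟩ := ha
    have ha := Subgroup.inv_mem _ ha
    rw [D.Dg_mul _ ha.2, ih, key _ k hk hok ha, mul_one]

lemma TT_ker (h3 : ∀ i j : ι, ∃ k, i ≠ k ∧ j ≠ k) {o l : ι} (hol : o ≠ l) (s : Finset ι) :
    ∀ t ∈ D.TT o s, D.π t = 1 → t ∈ D.M o l := by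
  induction s using Finset.induction_on with
  | empty =>
    intro t ht _
    have : D.TT o ∅ = ⊥ := by simp [TT]
    rw [this, Subgroup.mem_bot] at ht
    rw [ht]; exact Subgroup.one_mem _
  | insert j s hj ih =>
    intro t ht hK
    by_cases hoj : o = j
    · refine ih t ?_ hK
      refine Subgroup.closure_mono ?_ ht
      rintro g ⟨k, hk, hok, hg⟩
      rcases Finset.mem_insert.1 hk with rfl | hk
      · exact absurd hoj hok
      · exact ⟨k, hk, hok, hg⟩
    obtain ⟨a, ha, b, hb, rfl⟩ := factor (N := D.TT o s) (X := D.T o j) (by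
        intro b hb
        refine norm_closure (A := _) rfl _ ?_
        rintro n ⟨k, hk, hok, hn⟩
        exact D.TT_mem hk hok (D.T_norm_T h3 hoj hb _ _ n hn)) (by
        rintro g ⟨k, hk, hok, hg⟩
        rcases Finset.mem_insert.1 hk with rfl | hk
        · exact Or.inr hg
        · exact Or.inl (D.TT_mem hk hok hg)) ht
    have h1 : D.π (a * b) j j = 1 := by rw [hK, Matrix.one_apply_eq]
    rw [D.Dg_mul _ hb.2, D.TT_diag o s hj hoj ha, one_mul] at h1
    have hbd : D.π b = Matrix.diagonal (fun p => D.π b p p) := by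
      ext p q
      by_cases hpq : p = q
      · subst hpq; simp
      · rw [hb.2 _ _ hpq, Matrix.diagonal_apply_ne _ hpq]
    have hdet := D.hdet b
    have hne : ∀ p, p ≠ o → D.π b p p = 1 := by
      intro p hp
      by_cases hpj : p = j
      · subst hpj; exact h1
      · rw [D.M_row hp hpj hb.1, Matrix.one_apply_eq]
    have ho : D.π b o o = 1 := by
      rw [hbd, Matrix.det_diagonal, Fintype.prod_eq_single o hne] at hdet
      exact hdet
    have hbK : D.π b = 1 := by
      rw [hbd, ← Matrix.diagonal_one]
      congr 1; ext p
      by_cases hp : p = o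
      · subst hp; exact ho
      · exact hne p hp
    refine Subgroup.mul_mem _ (ih a ha ?_) ?_
    · rwa [map_mul, hbK, mul_one] at hK
    · have : b ∈ D.M j o := by rw [D.M_symm]; exact hb.1
      have := D.ker_move h3 (Ne.symm hoj) hol.symm this hbK
      rwa [D.M_symm] at this


/-- unipotent group attached to an order -/
def U (f : ι → ℤ) : Subgroup G := D.E (fun p q => f p < f q)

lemma U_tri {f : ι → ℤ} (hf : Function.Injective f) {g : G} (hg : g ∈ D.U f) :
    ∀ p q, f q ≤ f p → D.π g p q = (1 : Matrix ι ι S) p q := by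
  refine D.E_ind (p := fun g => ∀ p q, f q ≤ f p → D.π g p q = (1 : Matrix ι ι S) p q)
    (by simp) ?_ hg
  intro i j r y hij hP ih p q hpq
  by_cases h : p = i
  · subst h
    have : q ≠ j := by rintro rfl; omega
    rw [D.π_x_mul_same _ hij, ih _ _ hpq, ih j q (by omega), Matrix.one_apply_ne this.symm]; simp
  · rw [D.π_x_mul_ne _ hij _ _ _ h, ih _ _ hpq]

lemma E_single {i j : ι} (hij : i ≠ j) {g : G} (hg : g ∈ D.E (fun p q => p = i ∧ q = j)) :
    ∃ r, g = D.x i j r := by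
  refine D.E_ind (p := fun g => ∃ r, g = D.x i j r) ⟨0, (D.x_zero hij).symm⟩ ?_ hg
  rintro _ _ r _ _ ⟨rfl, rfl⟩ ⟨s, rfl⟩
  exact ⟨r + s, D.add _ _ _ _ hij⟩

lemma col_inj (a : ι) (s : Finset ι) (ha : a ∉ s) :
    ∀ g ∈ D.E (fun p q => p ∈ s ∧ q = a), (∀ p, D.π g p a = (1 : Matrix ι ι S) p a) → g = 1 := by
  induction s using Finset.induction_on with
  | empty =>
    intro g hg _
    refine D.E_ind (p := fun g => g = 1) rfl ?_ hg
    rintro i j r y _ ⟨h, _⟩ _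
    simp at h
  | insert b s hb ih =>
    intro g hg hK
    have hab : b ≠ a := by rintro rfl; simp at ha
    have has : a ∉ s := fun h => ha (Finset.mem_insert_of_mem h)
    obtain ⟨n, hn, y, hy, rfl⟩ := factor (N := D.E (fun p q => p ∈ s ∧ q = a))
      (X := D.E (fun p q => p = b ∧ q = a)) (D.norm_E (by
        rintro i j r k l t hij hkl ⟨rfl, rfl⟩ ⟨hk, rfl⟩
        rw [D.conj1 _ _ hij hkl hkl.symm hij]
        exact D.x_mem hkl ⟨hk, rfl⟩ _)) (by
        rintro _ ⟨k, l, t, hkl, ⟨hk, rfl⟩, rfl⟩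
        rcases Finset.mem_insert.1 hk with rfl | hk
        · exact Or.inr (D.x_mem hkl ⟨rfl, rfl⟩ _)
        · exact Or.inl (D.x_mem hkl ⟨hk, rfl⟩ _)) hg
    obtain ⟨r, rfl⟩ := D.E_single hab hy
    have hrow : ∀ q, D.π n b q = (1 : Matrix ι ι S) b q := fun q =>
      D.row_trivial (by rintro i j _ ⟨hi, _⟩ rfl; exact hb hi) hn q
    have h1 := hK b
    rw [map_mul, D.hπ _ _ _ hab, mul_transvection_apply_same, hrow, hrow] at h1
    simp [hab] at h1
    subst h1
    rw [D.x_zero hab, mul_one] at hK ⊢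
    exact ih has n hn hK

lemma U_inj {f : ι → ℤ} (hf : Function.Injective f) (s : Finset ι) :
    ∀ g ∈ D.E (fun p q => p ∈ s ∧ q ∈ s ∧ f p < f q), D.π g = 1 → g = 1 := by
  induction s using Finset.induction_on_max_value f with
  | empty =>
    intro g hg _
    refine D.E_ind (p := fun g => g = 1) rfl ?_ hg
    rintro i j r y _ ⟨h, _⟩ _
    simp at h
  | insert a s ha hmax ih =>
    intro g hg hK
    obtain ⟨n, hn, y, hy, rfl⟩ := factor (N := D.E (fun p q => p ∈ s ∧ q = a))
      (X := D.E (fun p q => p ∈ s ∧ q ∈ s ∧ f p < f q)) (D.norm_E (by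
        rintro i j r k l t hij hkl ⟨hi, hj, hlt⟩ ⟨hk, rfl⟩
        have hil : i ≠ l := by rintro rfl; exact ha hi
        by_cases hjk : j = k
        · subst hjk
          rw [D.conj2 _ _ hij hkl hil]
          exact Subgroup.mul_mem _ (D.x_mem hil ⟨hi, rfl⟩ _) (D.x_mem hkl ⟨hk, rfl⟩ _)
        · rw [D.conj1 _ _ hij hkl hjk hil]
          exact D.x_mem hkl ⟨hk, rfl⟩ _)) (by
        rintro _ ⟨k, l, t, hkl, ⟨hk, hl, hlt⟩, rfl⟩
        have hks : k ∈ s := by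
          rcases Finset.mem_insert.1 hk with rfl | hk
          · rcases Finset.mem_insert.1 hl with rfl | hl
            · exact absurd rfl hkl
            · have := hmax _ hl; omega
          · exact hk
        rcases Finset.mem_insert.1 hl with rfl | hl
        · exact Or.inl (D.x_mem hkl ⟨hks, rfl⟩ _)
        · exact Or.inr (D.x_mem hkl ⟨hks, hl, hlt⟩ _)) hg
    have hn1 : n = 1 := by
      refine D.col_inj a s ha n hn ?_
      intro p
      have h1 : D.π (n * y) p a = (1 : Matrix ι ι S) p a := by rw [hK]
      rw [map_mul, Matrix.mul_apply, Fintype.sum_eq_single a] at h1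
      · rw [D.col_trivial (by rintro i j _ ⟨_, hj, _⟩ rfl; exact ha hj) hy,
          Matrix.one_apply_eq, mul_one] at h1
        exact h1
      · intro k hk
        rw [D.col_trivial (by rintro i j _ ⟨_, hj, _⟩ rfl; exact ha hj) hy,
          Matrix.one_apply_ne hk, mul_zero]
    subst hn1
    rw [one_mul] at hK ⊢
    exact ih y hy hK

lemma U_ker {f : ι → ℤ} (hf : Function.Injective f) {g : G} (hg : g ∈ D.U f) (hK : D.π g = 1) :
    g = 1 :=
  D.U_inj hf Finset.univ g (D.E_mono (by intro i j _ h; simpa using h) hg) hK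

/-- radical of the minimal parabolic -/
def NP (f : ι → ℤ) (i j : ι) : Subgroup G := D.E (fun p q => f p < f q ∧ ¬ (p = i ∧ q = j))

lemma NP_norm {f : ι → ℤ} (hf : Function.Injective f) {i j : ι} (hij : f i < f j)
    (hadj : ∀ k, ¬ (f i < f k ∧ f k < f j)) :
    ∀ a ∈ D.M i j, ∀ n ∈ D.NP f i j, a * n * a⁻¹ ∈ D.NP f i j := by
  refine D.norm_E ?_
  have hne : ∀ {p q}, p ≠ q → f p ≠ f q := fun h h' => h (hf h')
  rintro p q r k l s hpq hkl hP ⟨hlt, hno⟩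
  have hmem := D.x_mem (P := fun p q => f p < f q ∧ ¬ (p = i ∧ q = j)) hkl ⟨hlt, hno⟩ s
  rcases hP with ⟨rfl, rfl⟩ | ⟨rfl, rfl⟩
  · by_cases h1 : q = k
    · subst h1
      have hpl : p ≠ l := by rintro rfl; omega
      rw [D.conj2 _ _ hpq hkl hpl]
      exact Subgroup.mul_mem _ (D.x_mem hpl ⟨by omega, fun h => hkl h.2.symm⟩ _) hmem
    · by_cases h2 : p = l
      · subst h2
        rw [D.conj3 _ _ hpq hkl (Ne.symm h1)]
        exact Subgroup.mul_mem _ hmem (D.x_mem (Ne.symm h1) ⟨by omega, fun h => hkl h.1⟩ _)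
      · rw [D.conj1 _ _ hpq hkl h1 h2]; exact hmem
  · by_cases h1 : q = k
    · subst h1
      have hpl : p ≠ l := by rintro rfl; exact hno ⟨rfl, rfl⟩
      rw [D.conj2 _ _ hpq hkl hpl]
      have := hadj l
      have := hne hpl
      exact Subgroup.mul_mem _ (D.x_mem hpl ⟨by omega, fun h => hpq h.1⟩ _) hmem
    · by_cases h2 : p = l
      · subst h2
        rw [D.conj3 _ _ hpq hkl (Ne.symm h1)]
        have := hadj k
        have := hne h1
        exact Subgroup.mul_mem _ hmem (D.x_mem (Ne.symm h1) ⟨by omega, fun h => hpq h.2.symm⟩ _)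
      · rw [D.conj1 _ _ hpq hkl h1 h2]; exact hmem

lemma U_factor {f : ι → ℤ} (hf : Function.Injective f) {i j : ι} (hij : f i < f j)
    (hadj : ∀ k, ¬ (f i < f k ∧ f k < f j)) {u : G} (hu : u ∈ D.U f) :
    ∃ n ∈ D.NP f i j, ∃ r, u = n * D.x i j r := by
  have hne : i ≠ j := by rintro rfl; omega
  obtain ⟨n, hn, y, hy, rfl⟩ := factor (N := D.NP f i j) (X := D.E (fun p q => p = i ∧ q = j))
    (fun a ha => D.NP_norm hf hij hadj a (D.E_mono (fun _ _ _ h => Or.inl h) ha)) (by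
      rintro _ ⟨k, l, t, hkl, hlt, rfl⟩
      by_cases h : k = i ∧ l = j
      · exact Or.inr (D.x_mem hkl h _)
      · exact Or.inl (D.x_mem hkl ⟨hlt, h⟩ _)) hu
  obtain ⟨r, rfl⟩ := D.E_single hne hy
  exact ⟨n, hn, r, rfl⟩

lemma NP_le (f : ι → ℤ) (i j : ι) : D.NP f i j ≤ D.U f := D.E_mono fun _ _ _ h => h.1

/-- rank one Gauss decomposition -/
lemma rank_one (hsr : ∀ p r x y : S, x * p + y * r = 1 → ∃ a, IsUnit (p + a * r))
    {i j : ι} (hij : i ≠ j) {g : G} (hg : g ∈ D.M i j) :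
    ∃ a b c, ∃ t ∈ D.T i j, g = D.x i j a * D.x j i b * D.x i j c * t := by
  have h1 := D.M_mul hij (Subgroup.inv_mem _ hg) g (Or.inl rfl : i = i ∨ i = j) i
  rw [inv_mul_cancel, map_one, Matrix.one_apply_eq] at h1
  obtain ⟨a, u, hu⟩ := hsr _ _ _ _ h1.symm
  let g1 := D.x i j a * g
  have e1 : D.π g1 i i = u := by rw [D.π_x_mul_same _ hij, hu]
  let b : S := - (D.π g1 j i * ↑u⁻¹)
  let g2 := D.x j i b * g1
  have e2 : D.π g2 j i = 0 := by
    rw [D.π_x_mul_same _ hij.symm, e1]; simp [b]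
  have m1 : g1 ∈ D.M i j := Subgroup.mul_mem _ (D.x_mem_M hij _) hg
  have m2 : g2 ∈ D.M i j := Subgroup.mul_mem _ (D.x_mem_M' hij _) m1
  have h2 := D.M_mul hij m2 g2⁻¹ (Or.inr rfl : j = i ∨ j = j) j
  rw [mul_inv_cancel, map_one, Matrix.one_apply_eq, e2, zero_mul, zero_add] at h2
  let c : S := - (D.π g2 i j * D.π g2⁻¹ j j)
  let g3 := D.x i j c * g2
  have m3 : g3 ∈ D.M i j := Subgroup.mul_mem _ (D.x_mem_M hij _) m2
  have e3 : D.π g3 i j = 0 := by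
    rw [D.π_x_mul_same _ hij]
    linear_combination D.π g2 i j * h2
  have e4 : D.π g3 j i = 0 := by rw [D.π_x_mul_ne _ hij _ _ _ hij.symm, e2]
  refine ⟨-a, -b, -c, g3, ⟨m3, ?_⟩, ?_⟩
  · intro p q hpq
    by_cases hp : p ≠ i ∧ p ≠ j
    · rw [D.M_row hp.1 hp.2 m3, Matrix.one_apply_ne hpq]
    by_cases hq : q ≠ i ∧ q ≠ j
    · rw [D.M_col hq.1 hq.2 m3, Matrix.one_apply_ne hpq]
    have : (p = i ∧ q = j) ∨ (p = j ∧ q = i) := by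
      by_cases h : p = i
      · subst h
        by_cases h' : q = j
        · exact Or.inl ⟨rfl, h'⟩
        · exact absurd ⟨Ne.symm hpq, h'⟩ hq
      · have hpj : p = j := by by_contra h'; exact hp ⟨h, h'⟩
        subst hpj
        by_cases h' : q = i
        · exact Or.inr ⟨rfl, h'⟩
        · exact absurd ⟨h', Ne.symm hpq⟩ hq
    rcases this with ⟨rfl, rfl⟩ | ⟨rfl, rfl⟩
    · exact e3
    · exact e4
  · simp only [g3, g2, g1, ← D.x_inv _ hij, ← D.x_inv _ hij.symm]
    group

/-- the big cell product -/
def Y (f : ι → ℤ) (o : ι) (y : G) : Prop := ∃ u ∈ D.U f, ∃ v ∈ D.U (fun i => - f i),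
  ∃ u' ∈ D.U f, ∃ t ∈ D.TT o Finset.univ, y = u * v * u' * t

lemma Y_step (h3 : ∀ i j : ι, ∃ k, i ≠ k ∧ j ≠ k)
    (hsr : ∀ p r x y : S, x * p + y * r = 1 → ∃ a, IsUnit (p + a * r))
    {f : ι → ℤ} (hf : Function.Injective f) (o : ι) {i j : ι} (hij : f i < f j)
    (hadj : ∀ k, ¬ (f i < f k ∧ f k < f j)) {m y : G} (hm : m ∈ D.M i j) (hy : D.Y f o y) :
    D.Y f o (m * y) := by
  have hne : i ≠ j := by rintro rfl; omega
  have hf' : Function.Injective (fun i => - f i) := fun a b h => hf (neg_injective h)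
  have hij' : (fun i => - f i) j < (fun i => - f i) i := by simpa using hij
  have hadj' : ∀ k, ¬ ((fun i => - f i) j < (fun i => - f i) k ∧
      (fun i => - f i) k < (fun i => - f i) i) := by
    intro k hk; exact hadj k (by simpa using hk.symm)
  have norm := D.NP_norm hf hij hadj
  have norm' := D.NP_norm hf' hij' hadj'
  rw [D.M_symm] at norm'
  obtain ⟨u, hu, v, hv, u', hu', t, ht, rfl⟩ := hy
  obtain ⟨n1, hn1, r1, rfl⟩ := D.U_factor hf hij hadj hu
  obtain ⟨n2, hn2, r2, rfl⟩ := D.U_factor hf' hij' hadj' hv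
  obtain ⟨n3, hn3, r3, rfl⟩ := D.U_factor hf hij hadj hu'
  have X : ∀ r, D.x i j r ∈ D.M i j := D.x_mem_M hne
  have X' : ∀ r, D.x j i r ∈ D.M i j := D.x_mem_M' hne
  have k2 : m * D.x i j r1 ∈ D.M i j := Subgroup.mul_mem _ hm (X _)
  have k3 : m * D.x i j r1 * D.x j i r2 ∈ D.M i j := Subgroup.mul_mem _ k2 (X' _)
  have k4 : m * D.x i j r1 * D.x j i r2 * D.x i j r3 ∈ D.M i j := Subgroup.mul_mem _ k3 (X _)
  obtain ⟨a, b, c, τ, hτ, e⟩ := D.rank_one hsr hne k4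
  have w1 := norm _ hm _ hn1
  have w2 := norm' _ (Subgroup.inv_mem _ (X a)) _ (norm' _ k2 _ hn2)
  have w3 := norm _ (Subgroup.inv_mem _ (Subgroup.mul_mem _ (X a) (X' b))) _ (norm _ k3 _ hn3)
  refine ⟨_, Subgroup.mul_mem _ (D.NP_le _ _ _ w1) (D.x_mem hne hij a),
    _, Subgroup.mul_mem _ (D.NP_le _ _ _ w2) (D.x_mem hne.symm hij' b),
    _, Subgroup.mul_mem _ (D.NP_le _ _ _ w3) (D.x_mem hne hij c),
    _, Subgroup.mul_mem _ (D.T_le_TT h3 o hne hτ) ht, ?_⟩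
  have e' : τ = (D.x i j a * D.x j i b * D.x i j c)⁻¹ *
    (m * D.x i j r1 * D.x j i r2 * D.x i j r3) := by rw [e]; group
  rw [e']
  group

lemma Y_ker (h3 : ∀ i j : ι, ∃ k, i ≠ k ∧ j ≠ k) {f : ι → ℤ} (hf : Function.Injective f)
    {o l : ι} (hol : o ≠ l) {k : G} (hk : D.Y f o k) (hK : D.π k = 1) : k ∈ D.M o l := by
  have hf' : Function.Injective (fun i => - f i) := fun a b h => hf (neg_injective h)
  obtain ⟨u, hu, v, hv, u', hu', t, ht, rfl⟩ := hk
  have hw : u' * (t * u * t⁻¹) ∈ D.U f :=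
    Subgroup.mul_mem _ hu' (D.TT_norm h3 o _ _ t ht u hu)
  set w := u' * (t * u * t⁻¹) with hwdef
  have e : u⁻¹ * (u * v * u' * t) * u = v * w * t := by rw [hwdef]; group
  have hK2 : D.π (v * w * t) = 1 := by
    rw [← e, map_mul, map_mul, hK, mul_one, ← map_mul]; simp
  have hti := Subgroup.inv_mem _ (D.TT_Dg _ _ ht)
  have hvi := Subgroup.inv_mem _ hv
  -- w and v⁻¹ t⁻¹ have the same matrix
  have hw2 : D.π w = D.π (v⁻¹ * t⁻¹) := by
    have : w = v⁻¹ * (v * w * t) * t⁻¹ := by group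
    rw [this, map_mul, map_mul, hK2, mul_one, map_mul]
  have hw1 : D.π w = 1 := by
    ext p q
    by_cases h : f q ≤ f p
    · exact D.U_tri hf hw p q h
    · have hpq : p ≠ q := by rintro rfl; simp at h
      rw [hw2, D.Dg_mul _ hti, D.U_tri hf' hvi p q (by omega),
        Matrix.one_apply_ne hpq, zero_mul]
  have hwe : w = 1 := D.U_ker hf hw hw1
  rw [hwe, mul_one] at hK2
  have hv2 : D.π v = D.π t⁻¹ := by
    have : v = (v * t) * t⁻¹ := by group
    rw [this, map_mul, hK2, one_mul]
  have hv1 : D.π v = 1 := by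
    ext p q
    by_cases h : p = q
    · subst h; exact D.U_tri hf' hv p p le_rfl
    · rw [hv2, hti _ _ h, Matrix.one_apply_ne h]
  have hve : v = 1 := D.U_ker hf' hv hv1
  have htK : D.π t = 1 := by rwa [hve, one_mul] at hK2
  have htM := D.TT_ker h3 hol _ t ht htK
  have : u * v * u' * t = u * t * u⁻¹ := by
    have : u * v * u' * t = u * (v * w * t) * u⁻¹ := by rw [← e]; group
    rw [this, hve, hwe]; group
  rw [this, D.central h3 hol htM htK]
  exact htM

end StD

/-- adjacency generation -/
lemma StD.adj_gen {n : ℕ} {S : Type*} [CommRing S] {G : Type*} [Group G] (D : StD (Fin n) S G)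
    (m : ℕ) : ∀ p q : Fin n, p ≠ q → p.val ≤ q.val + (m + 1) → q.val ≤ p.val + (m + 1) → ∀ r,
      D.x p q r ∈ D.E (fun p q => p.val + 1 = q.val ∨ q.val + 1 = p.val) := by
  induction m with
  | zero =>
    intro p q hpq h1 h2 r
    have : p.val ≠ q.val := fun h => hpq (Fin.ext h)
    exact D.x_mem hpq (by omega) r
  | succ m ih =>
    intro p q hpq h1 h2 r
    have hv : p.val ≠ q.val := fun h => hpq (Fin.ext h)
    by_cases hle : p.val ≤ q.val + (m + 1) ∧ q.val ≤ p.val + (m + 1)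
    · exact ih p q hpq hle.1 hle.2 r
    have : ∃ k : Fin n, p ≠ k ∧ q ≠ k ∧ (p.val ≤ k.val + (m + 1) ∧ k.val ≤ p.val + (m + 1)) ∧
        (k.val ≤ q.val + (m + 1) ∧ q.val ≤ k.val + (m + 1)) := by
      rcases lt_or_gt_of_ne hv with h | h
      · refine ⟨⟨q.val - 1, by omega⟩, ?_, ?_, ?_, ?_⟩ <;> simp only [Ne, Fin.ext_iff] <;> omega
      · refine ⟨⟨p.val - 1, by omega⟩, ?_, ?_, ?_, ?_⟩ <;> simp only [Ne, Fin.ext_iff] <;> omega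
    obtain ⟨k, hpk, hqk, ⟨h4, h5⟩, h6, h7⟩ := this
    have a := ih p k hpk h4 h5 r
    have b := ih k q hqk.symm h6 h7 1
    rw [← mul_one r, D.x_eq_comm hpq hpk hqk r 1]
    exact Subgroup.mul_mem _ (Subgroup.mul_mem _ (Subgroup.mul_mem _ a b) (Subgroup.inv_mem _ a))
      (Subgroup.inv_mem _ b)

theorem StD.main {n : ℕ} (hn : 3 ≤ n) {S : Type*} [CommRing S] {G : Type*} [Group G]
    (D : StD (Fin n) S G)
    (hsr : ∀ p r x y : S, x * p + y * r = 1 → ∃ a, IsUnit (p + a * r)) (k : G)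
    (hK : D.π k = 1) : k ∈ D.M ⟨0, by omega⟩ ⟨1, by omega⟩ := by
  have h3 : ∀ i j : Fin n, ∃ k, i ≠ k ∧ j ≠ k := by
    intro i j
    have : ∃ m < 3, i.val ≠ m ∧ j.val ≠ m := by
      by_contra! h
      have h0 := h 0; have h1 := h 1; have h2 := h 2
      omega
    obtain ⟨m, hm, h1, h2⟩ := this
    exact ⟨⟨m, by omega⟩, fun h => h1 (by rw [h]), fun h => h2 (by rw [h])⟩
  have hf : Function.Injective (fun i : Fin n => (i.val : ℤ)) := by
    intro a b h; apply Fin.ext; simpa using h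
  refine D.Y_ker h3 hf (o := ⟨0, by omega⟩) (l := ⟨1, by omega⟩) (by simp) ?_ hK
  have hk : k ∈ D.E (fun p q => p.val + 1 = q.val ∨ q.val + 1 = p.val) := by
    have : k ∈ Subgroup.closure {g | ∃ i j r, i ≠ j ∧ g = D.x i j r} := by rw [D.gen]; trivial
    refine (Subgroup.closure_le _).2 ?_ this
    rintro _ ⟨i, j, r, hij, rfl⟩
    exact D.adj_gen n i j hij (by omega) (by omega) r
  refine D.E_ind (p := D.Y _ _) ?_ ?_ hk
  · exact ⟨1, Subgroup.one_mem _, 1, Subgroup.one_mem _, 1, Subgroup.one_mem _, 1,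
      Subgroup.one_mem _, by simp⟩
  · intro i j r y hij hP hy
    rcases hP with h | h
    · refine D.Y_step h3 hsr hf _ (i := i) (j := j) (by omega) ?_ (D.x_mem_M hij r) hy
      intro k; omega
    · refine D.Y_step h3 hsr hf _ (i := j) (j := i) (by omega) ?_
        (D.x_mem_M' hij.symm r) hy
      intro k; omega

lemma finite_sr_one {S : Type*} [CommRing S] [Finite S] (p r x y : S) (h : x * p + y * r = 1) :
    ∃ a, IsUnit (p + a * r) := by
  obtain ⟨a, b, hab, e⟩ : ∃ a b : ℕ, a < b ∧ p ^ a = p ^ b := by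
    obtain ⟨a, b, hne, e⟩ := Finite.exists_ne_map_eq_of_infinite (fun n : ℕ => p ^ n)
    rcases lt_or_gt_of_ne hne with h | h
    · exact ⟨a, b, h, e⟩
    · exact ⟨b, a, h, e.symm⟩
  refine ⟨1 - p ^ (b - a), ?_⟩
  by_contra hu
  obtain ⟨m, hm, hmem⟩ := exists_max_ideal_of_mem_nonunits (mem_nonunits_iff.mpr hu)
  have hz : p ^ a * (1 - p ^ (b - a)) = 0 := by
    rw [mul_sub, mul_one, ← pow_add, Nat.add_sub_cancel' hab.le, e, sub_self]
  by_cases hp : p ∈ m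
  · have h1 : (1 - p ^ (b - a)) * r ∈ m := (m.add_mem_iff_right hp).1 hmem
    have hpc : p ^ (b - a) ∈ m := Ideal.pow_mem_of_mem m hp _ (by omega)
    have hr : r ∈ m := by
      have := m.add_mem h1 (m.mul_mem_right r hpc)
      convert this using 1; ring
    apply hm.ne_top
    rw [Ideal.eq_top_iff_one, ← h]
    exact m.add_mem (m.mul_mem_left _ hp) (m.mul_mem_left _ hr)
  · have h0 : p ^ a * (1 - p ^ (b - a)) ∈ m := by rw [hz]; exact m.zero_mem
    have hpr := hm.isPrime
    rcases hpr.mem_or_mem h0 with h1 | h1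
    · exact hp (hpr.mem_of_pow_mem _ h1)
    · exact hp ((m.add_mem_iff_left (m.mul_mem_right r h1)).1 hmem)

section final

variable {R : Type*} [CommRing R] {d : ℕ}

lemma SL_ext' {a b : SpecialLinearGroup (Fin d) R}
    (h : (a : Matrix (Fin d) (Fin d) R) = (b : Matrix (Fin d) (Fin d) R)) : a = b := Subtype.ext h

lemma SL_mul (a b : SpecialLinearGroup (Fin d) R) :
    ((a * b : SpecialLinearGroup (Fin d) R) : Matrix (Fin d) (Fin d) R) =
      (a : Matrix (Fin d) (Fin d) R) * (b : Matrix (Fin d) (Fin d) R) := rfl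

lemma SL_one : ((1 : SpecialLinearGroup (Fin d) R) : Matrix (Fin d) (Fin d) R) = 1 := rfl

lemma sg_zero {i j k l : Fin d} (h : j ≠ k) (c e : R) :
    Matrix.single i j c * Matrix.single k l e = 0 := by
  simp [h]

/-- total transvection -/
def tv (i j : Fin d) (c : R) : SpecialLinearGroup (Fin d) R :=
  if h : i = j then 1 else ⟨Matrix.transvection i j c, Matrix.det_transvection_of_ne i j h c⟩

lemma tv_coe {i j : Fin d} (h : i ≠ j) (c : R) :
    (tv i j c : Matrix (Fin d) (Fin d) R) = Matrix.transvection i j c := by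
  simp [tv, h]

lemma tv_eq {i j : Fin d} (h : i ≠ j) (c : R) (s : SpecialLinearGroup (Fin d) R)
    (hs : (s : Matrix (Fin d) (Fin d) R) = Matrix.transvection i j c) : s = tv i j c :=
  Subtype.ext (by rw [hs]; exact (tv_coe h c).symm)

lemma tv_add {i j : Fin d} (h : i ≠ j) (c e : R) : tv i j c * tv i j e = tv i j (c + e) := by
  apply SL_ext'
  rw [SL_mul, tv_coe h, tv_coe h, tv_coe h,
    transvection_mul_transvection_same _ _ h]

lemma tv_comm {i j k l : Fin d} (h : i ≠ j) (h' : k ≠ l) (h1 : j ≠ k) (h2 : i ≠ l) (c e : R) :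
    tv i j c * tv k l e = tv k l e * tv i j c := by
  apply SL_ext'
  rw [SL_mul, SL_mul, tv_coe h, tv_coe h']
  simp only [transvection, mul_add, add_mul, one_mul, mul_one,
    sg_zero h1, sg_zero h2.symm]
  abel

lemma tv_rel {i j k : Fin d} (hij : i ≠ j) (hjk : j ≠ k) (hik : i ≠ k) (c e : R) :
    tv i j c * tv j k e = tv i k (c * e) * tv j k e * tv i j c := by
  apply SL_ext'
  simp only [SL_mul, tv_coe hij, tv_coe hjk, tv_coe hik]
  simp only [transvection, mul_add, add_mul, one_mul, mul_one,
    sg_zero hik.symm, sg_zero hjk.symm,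
    Matrix.single_mul_single_same, zero_mul]
  abel

lemma EH_normal (H : Ideal R) (hE : Esub R d = ⊤) : (EHsub R d H).Normal := by
  constructor
  intro n hn g
  refine StD.norm_closure (A := _) rfl g ?_ n hn
  rintro _ ⟨g', _, s, hs, rfl⟩
  refine Subgroup.subset_closure ⟨g * g', by rw [hE]; trivial, s, hs, by group⟩

lemma tv_mem_EH (H : Ideal R) {i j : Fin d} (h : i ≠ j) {c : R} (hc : c ∈ H) :
    tv i j c ∈ EHsub R d H :=
  Subgroup.subset_closure ⟨1, Subgroup.one_mem _, tv i j c, ⟨i, j, c, h, hc, tv_coe h c⟩, by simp⟩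

lemma map_tv (H : Ideal R) {i j : Fin d} (h : i ≠ j) (c : R) :
    (SpecialLinearGroup.map (n := Fin d) (Ideal.Quotient.mk H) (tv i j c) :
      Matrix (Fin d) (Fin d) (R ⧸ H)) = Matrix.transvection i j (Ideal.Quotient.mk H c) := by
  rw [SpecialLinearGroup.map_apply_coe, tv_coe h]
  ext p q
  simp only [RingHom.mapMatrix_apply, Matrix.map_apply, transvection, Matrix.add_apply,
    Matrix.single_apply, Matrix.one_apply, map_add]
  congr 1 <;> split_ifs <;> simp

lemma EH_le (H : Ideal R) : EHsub R d H ≤ SLrel R d H := by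
  refine (Subgroup.closure_le _).2 ?_
  rintro _ ⟨g, _, s, ⟨i, j, c, h, hc, hs⟩, rfl⟩
  have hn : (SLrel R d H).Normal := by unfold SLrel; infer_instance
  refine hn.conj_mem _ ?_ g
  rw [tv_eq h c s hs]
  refine MonoidHom.mem_ker.2 (Subtype.ext ?_)
  rw [map_tv H h, Ideal.Quotient.eq_zero_iff_mem.2 hc]
  simp

/-- the representation -/
def repHom (H : Ideal R) : SpecialLinearGroup (Fin d) R →* Matrix (Fin d) (Fin d) (R ⧸ H) where
  toFun g := (SpecialLinearGroup.map (n := Fin d) (Ideal.Quotient.mk H) g).1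
  map_one' := by simp
  map_mul' a b := by simp

variable (H : Ideal R)

/-- root elements in the quotient -/
noncomputable def xq [(EHsub R d H).Normal] (i j : Fin d) (s : R ⧸ H) :
    SpecialLinearGroup (Fin d) R ⧸ EHsub R d H :=
  QuotientGroup.mk (tv i j (Quotient.out s))

lemma xq_mk [(EHsub R d H).Normal] {i j : Fin d} (h : i ≠ j) (c : R) :
    xq H i j (Ideal.Quotient.mk H c) = QuotientGroup.mk (tv i j c) := by
  unfold xq
  refine QuotientGroup.eq.2 ?_
  have hi : (tv i j (Quotient.out (Ideal.Quotient.mk H c)))⁻¹ * tv i j c =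
      tv i j (c - Quotient.out (Ideal.Quotient.mk H c)) := by
    rw [inv_mul_eq_iff_eq_mul, tv_add h]; congr 1; ring
  rw [hi]
  refine tv_mem_EH H h ?_
  rw [← Ideal.Quotient.eq]
  exact (Quotient.out_eq (Ideal.Quotient.mk H c)).symm

/-- Steinberg data of `SL_d(R)/E_d(R,H)` -/
noncomputable def dat (hE : Esub R d = ⊤) [(EHsub R d H).Normal] :
    StD (Fin d) (R ⧸ H) (SpecialLinearGroup (Fin d) R ⧸ EHsub R d H) where
  x := xq H
  π := QuotientGroup.lift _ (repHom H) (by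
    intro g hg
    have := MonoidHom.mem_ker.1 (EH_le H hg)
    exact MonoidHom.mem_ker.2 (congrArg (fun z : SpecialLinearGroup (Fin d) (R ⧸ H) =>
      (z : Matrix (Fin d) (Fin d) (R ⧸ H))) this))
  add := by
    intro i j r s h
    obtain ⟨r, rfl⟩ := Ideal.Quotient.mk_surjective r
    obtain ⟨s, rfl⟩ := Ideal.Quotient.mk_surjective s
    rw [← map_add, xq_mk H h, xq_mk H h, xq_mk H h, ← QuotientGroup.mk_mul, tv_add h]
  comm := by
    intro i j k l r s h h' h1 h2
    obtain ⟨r, rfl⟩ := Ideal.Quotient.mk_surjective r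
    obtain ⟨s, rfl⟩ := Ideal.Quotient.mk_surjective s
    rw [xq_mk H h, xq_mk H h', ← QuotientGroup.mk_mul, tv_comm h h' h1 h2, QuotientGroup.mk_mul]
  rel := by
    intro i j k r s h h' h1
    obtain ⟨r, rfl⟩ := Ideal.Quotient.mk_surjective r
    obtain ⟨s, rfl⟩ := Ideal.Quotient.mk_surjective s
    rw [← map_mul, xq_mk H h, xq_mk H h', xq_mk H h1, ← QuotientGroup.mk_mul, tv_rel h h' h1,
      QuotientGroup.mk_mul, QuotientGroup.mk_mul]
  hπ := by
    intro i j r h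
    obtain ⟨r, rfl⟩ := Ideal.Quotient.mk_surjective r
    rw [xq_mk H h]
    exact map_tv H h r
  hdet := by
    intro g
    obtain ⟨g, rfl⟩ := QuotientGroup.mk_surjective g
    exact (SpecialLinearGroup.map (n := Fin d) (Ideal.Quotient.mk H) g).2
  gen := by
    rw [eq_top_iff]
    rintro g -
    obtain ⟨g, rfl⟩ := QuotientGroup.mk_surjective g
    have hg : g ∈ Esub R d := by rw [hE]; trivial
    unfold Esub at hg
    induction hg using Subgroup.closure_induction with
    | mem a ha =>
      obtain ⟨i, j, c, h, ha⟩ := ha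
      refine Subgroup.subset_closure ⟨i, j, Ideal.Quotient.mk H c, h, ?_⟩
      rw [xq_mk H h, tv_eq h c a ha]
    | one => exact Subgroup.one_mem _
    | mul y z _ _ hy hz => exact Subgroup.mul_mem _ hy hz
    | inv y _ hy => exact Subgroup.inv_mem _ hy

/-- block form -/
def Blk (b : SpecialLinearGroup (Fin d) R) : Prop :=
  ∃ A : Matrix (Fin 2) (Fin 2) R, A.det = 1 ∧ ∀ p q : Fin d,
    (b : Matrix (Fin d) (Fin d) R) p q =
      if hp : p.val < 2 then
        (if hq : q.val < 2 then A ⟨p.val, hp⟩ ⟨q.val, hq⟩ else 0)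
      else (1 : Matrix (Fin d) (Fin d) R) p q

lemma blk_one : Blk (1 : SpecialLinearGroup (Fin d) R) := by
  refine ⟨1, by simp, ?_⟩
  intro p q
  rw [SL_one]
  simp only [Matrix.one_apply, Fin.ext_iff]
  split_ifs <;> first | rfl | omega

lemma blk_step {i j : Fin d} (hi : i.val < 2) (hj : j.val < 2) (hij : i ≠ j) (c : R)
    {b : SpecialLinearGroup (Fin d) R} (hb : Blk b) : Blk (tv i j c * b) := by
  obtain ⟨A, hA, h⟩ := hb
  have hij' : (⟨i.val, hi⟩ : Fin 2) ≠ ⟨j.val, hj⟩ := by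
    intro h; exact hij (Fin.ext (by simpa using h))
  refine ⟨transvection ⟨i.val, hi⟩ ⟨j.val, hj⟩ c * A, ?_, ?_⟩
  · rw [Matrix.det_mul, Matrix.det_transvection_of_ne _ _ hij', hA, one_mul]
  · intro p q
    rw [SL_mul, tv_coe hij]
    by_cases hp : p = i
    · subst hp
      rw [transvection_mul_apply_same, h, h]
      simp only [hi, hj, dite_true]
      split_ifs with hq
      · rw [transvection_mul_apply_same]
      · simp
    · rw [transvection_mul_apply_of_ne _ _ _ _ hp, h]
      split_ifs with h1 h2
      · rw [transvection_mul_apply_of_ne]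
        intro h; exact hp (Fin.ext (by simpa using h))
      · rfl
      · rfl

lemma blk_lift (hE : Esub R d = ⊤) [(EHsub R d H).Normal] {i j : Fin d} (hi : i.val < 2)
    (hj : j.val < 2) {k : SpecialLinearGroup (Fin d) R ⧸ EHsub R d H}
    (hk : k ∈ (dat H hE).M i j) :
    ∃ b : SpecialLinearGroup (Fin d) R, Blk b ∧ QuotientGroup.mk b = k := by
  refine (dat H hE).E_ind (p := fun k => ∃ b : SpecialLinearGroup (Fin d) R, Blk b ∧
    QuotientGroup.mk b = k) ⟨1, blk_one, rfl⟩ ?_ hk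
  rintro p q r _ hpq hP ⟨b, hb, rfl⟩
  obtain ⟨c, rfl⟩ := Ideal.Quotient.mk_surjective r
  refine ⟨tv p q c * b, blk_step ?_ ?_ hpq c hb, ?_⟩
  · rcases hP with ⟨rfl, rfl⟩ | ⟨rfl, rfl⟩ <;> assumption
  · rcases hP with ⟨rfl, rfl⟩ | ⟨rfl, rfl⟩ <;> assumption
  · rw [QuotientGroup.mk_mul, ← xq_mk H hpq]; rfl

end final

/-- If `H` has finite index in `R`, `d ≥ 3`, and `E_d(R) = SL_d(R)`, then every element of
`SK₁(R,H;d)` has a representative in `SL_d(R,H)` of block form `diag(A, I_{d-2})` with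
`A ∈ SL₂(R,H)`. -/
theorem SK1_rep_two_by_two (R : Type*) [CommRing R] (H : Ideal R) [Finite (R ⧸ H)]
    (d : ℕ) (hd : 3 ≤ d) (hE : Esub R d = ⊤) :
    ∀ a : SpecialLinearGroup (Fin d) R, a ∈ SLrel R d H →
      ∃ b : SpecialLinearGroup (Fin d) R, b ∈ SLrel R d H ∧
        a * b⁻¹ ∈ EHsub R d H ∧
        ∃ A : Matrix (Fin 2) (Fin 2) R, A.det = 1 ∧
          (∀ p q : Fin 2, A p q - (1 : Matrix (Fin 2) (Fin 2) R) p q ∈ H) ∧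
          ∀ p q : Fin d,
            (b : Matrix (Fin d) (Fin d) R) p q =
              if hp : p.val < 2 then
                (if hq : q.val < 2 then A ⟨p.val, hp⟩ ⟨q.val, hq⟩ else 0)
              else (1 : Matrix (Fin d) (Fin d) R) p q := by
  intro a ha
  have hN := EH_normal H hE
  have hK : (dat H hE).π (QuotientGroup.mk a) = 1 := by
    have h := MonoidHom.mem_ker.1 ha
    exact congrArg Subtype.val h
  have hM := (dat H hE).main hd finite_sr_one _ hK
  obtain ⟨b, ⟨A, hA, hb⟩, hba⟩ := blk_lift H hE (by simp) (by simp) hM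
  have hab : b⁻¹ * a ∈ EHsub R d H := QuotientGroup.eq.1 hba
  have hab' : a * b⁻¹ ∈ EHsub R d H := hN.mem_comm hab
  have hbS : b ∈ SLrel R d H := by
    have : b = (a * b⁻¹)⁻¹ * a := by group
    rw [this]
    exact Subgroup.mul_mem _ (Subgroup.inv_mem _ (EH_le H hab')) ha
  refine ⟨b, hbS, hab', A, hA, ?_, hb⟩
  intro p q
  let p' : Fin d := ⟨p.val, by omega⟩
  let q' : Fin d := ⟨q.val, by omega⟩
  have h1 : (b : Matrix (Fin d) (Fin d) R) p' q' = A p q := by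
    rw [hb, dif_pos (show p'.val < 2 from p.isLt), dif_pos (show q'.val < 2 from q.isLt)]
  have h2 : (Ideal.Quotient.mk H) ((b : Matrix (Fin d) (Fin d) R) p' q') =
      (1 : Matrix (Fin d) (Fin d) (R ⧸ H)) p' q' := by
    have h0 := MonoidHom.mem_ker.1 hbS
    have h := congrArg (fun z : SpecialLinearGroup (Fin d) (R ⧸ H) =>
      (z : Matrix (Fin d) (Fin d) (R ⧸ H))) h0
    exact congrFun (congrFun h p') q'
  rw [← Ideal.Quotient.eq_zero_iff_mem, map_sub, ← h1, h2]
  simp only [Matrix.one_apply, Fin.ext_iff, p', q']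
  split_ifs <;> simp
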